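/- Let M be an R-module, N a submodule of M, and endow Spec^s(M) with the second classical Zariski topology. Then V^{s*}(N) is an irreducible subset of Spec^s(M) if and only if soc(N), the sum of all second submodules of M contained in N, is a second submodule of M. In particular, Spec^s(M) is irreducible if and only if soc(M) is a second submodule of M. -/

import Mathlib

open Pointwise

variable (R M : Type*) [CommRing R] [AddCommGroup M] [Module R M]

/-- A nonzero submodule `S` is *second* if for every `r : R`, `r • S = S` or `r • S = ⊥`. -/
def IsSecondSubmodule (S : Submodule R M) : Prop :=
  S ≠ ⊥ ∧ ∀ r : R, r • S = S ∨ r • S = ⊥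

/-- The second spectrum of `M`: the collection of all second submodules of `M`. -/
def SecondSpec : Type _ := {S : Submodule R M // IsSecondSubmodule R M S}

/-- `V^{s*}(N)`: the set of second submodules contained in `N`. -/
def Vs (N : Submodule R M) : Set (SecondSpec R M) := {S | S.1 ≤ N}

/-- `W^s(N)`: the complement of `V^{s*}(N)` in `Spec^s(M)`. -/
def Ws (N : Submodule R M) : Set (SecondSpec R M) := (Vs R M N)ᶜ

/-- The second classical Zariski topology on `Spec^s(M)`, generated by the
sub-basis `{W^s(N) : N ≤ M}`. -/
instance secondZariski : TopologicalSpace (SecondSpec R M) :=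
  TopologicalSpace.generateFrom {U | ∃ N : Submodule R M, U = Ws R M N}

/-- The second socle of a submodule `N`: the sum of all second submodules of `M`
contained in `N`. -/
def secSocle (N : Submodule R M) : Submodule R M :=
  sSup {S : Submodule R M | IsSecondSubmodule R M S ∧ S ≤ N}

/-! Every subbasic closed set `V^{s*}(K)` is a lower set for inclusion, so `T` specializes to `S`
exactly when `S ≤ T`. Hence if `soc(N)` is second, it is a generic point of `V^{s*}(N)`.

Conversely, let `Y` be an irreducible set with sum `T`, and let `r : R`. Each `S ∈ Y` satisfies
`S = r • S ≤ r • T` or `S ≤ (0 :_M r)`, so `Y` is covered by the closed sets `V^{s*}(r • T)` and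
`V^{s*}((0 :_M r))`. By irreducibility one of them contains `Y`, and summing over `Y` gives
`T ≤ r • T` or `r • T = 0`. -/

section

variable {R M}

theorem isSecondSubmodule_iff_le_smul_or_le_torsionBy {S : Submodule R M} :
    IsSecondSubmodule R M S ↔ S ≠ ⊥ ∧ ∀ r : R, S ≤ r • S ∨ S ≤ Submodule.torsionBy R M r := by
  have smul_eq_self_iff (r : R) : r • S = S ↔ S ≤ r • S :=
    (Submodule.smul_le_self_of_tower r S).ge_iff_eq.symm
  have smul_eq_bot_iff (r : R) : r • S = ⊥ ↔ S ≤ Submodule.torsionBy R M r :=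
    LinearMap.le_ker_iff_map.symm
  simp only [IsSecondSubmodule, smul_eq_self_iff, smul_eq_bot_iff]

theorem IsSecondSubmodule.le_smul_or_le_torsionBy {S T : Submodule R M}
    (hS : IsSecondSubmodule R M S) (hST : S ≤ T) (r : R) :
    S ≤ r • T ∨ S ≤ Submodule.torsionBy R M r :=
  ((isSecondSubmodule_iff_le_smul_or_le_torsionBy.1 hS).2 r).imp_left
    (·.trans (smul_mono_right r hST))

theorem mem_Vs {N : Submodule R M} {S : SecondSpec R M} : S ∈ Vs R M N ↔ S.1 ≤ N :=
  Iff.rfl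

theorem Vs_top : Vs R M ⊤ = Set.univ :=
  Set.eq_univ_of_forall fun _ => mem_Vs.2 le_top

theorem isClosed_Vs (N : Submodule R M) : IsClosed (Vs R M N) :=
  ⟨TopologicalSpace.isOpen_generateFrom_of_mem ⟨N, rfl⟩⟩

theorem SecondSpec.specializes_iff_le {S T : SecondSpec R M} : T ⤳ S ↔ S.1 ≤ T.1 := by
  constructor
  · intro h
    exact mem_Vs.1 (h.mem_closed (isClosed_Vs T.1) (mem_Vs.2 le_rfl))
  · intro hST
    simp only [Specializes, TopologicalSpace.nhds_generateFrom, le_iInf₂_iff]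
    rintro _ ⟨hS, N, rfl⟩
    exact iInf₂_le _ ⟨fun hT => hS (hST.trans hT), N, rfl⟩

theorem IsSecondSubmodule.le_secSocle_iff {S N : Submodule R M} (hS : IsSecondSubmodule R M S) :
    S ≤ secSocle R M N ↔ S ≤ N :=
  ⟨(·.trans (sSup_le fun _ hT => hT.2)), fun hSN => le_sSup ⟨hS, hSN⟩⟩

theorem secSocle_eq_iSup (N : Submodule R M) : secSocle R M N = ⨆ S ∈ Vs R M N, S.1 :=
  le_antisymm
    (sSup_le fun S hS => le_iSup₂_of_le (⟨S, hS.1⟩ : SecondSpec R M) hS.2 le_rfl)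
    (iSup₂_le fun S hS => S.2.le_secSocle_iff.2 hS)

theorem isSecondSubmodule_iSup_of_isIrreducible {Y : Set (SecondSpec R M)} (hY : IsIrreducible Y) :
    IsSecondSubmodule R M (⨆ S ∈ Y, S.1) := by
  set T := ⨆ S ∈ Y, S.1
  have le_T {S : SecondSpec R M} (hS : S ∈ Y) : S.1 ≤ T := le_iSup₂_of_le S hS le_rfl
  refine isSecondSubmodule_iff_le_smul_or_le_torsionBy.2 ⟨?_, fun r => ?_⟩
  · obtain ⟨S, hS⟩ := hY.nonempty
    exact ne_bot_of_le_ne_bot S.2.1 (le_T hS)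
  · have cover : Y ⊆ Vs R M (r • T) ∪ Vs R M (Submodule.torsionBy R M r) :=
      fun S hS => S.2.le_smul_or_le_torsionBy (le_T hS) r
    exact (isPreirreducible_iff_isClosed_union_isClosed.1 hY.isPreirreducible _ _
      (isClosed_Vs _) (isClosed_Vs _) cover).imp iSup₂_le iSup₂_le

theorem isGenericPoint_secSocle {N : Submodule R M}
    (h : IsSecondSubmodule R M (secSocle R M N)) :
    IsGenericPoint (α := SecondSpec R M) ⟨secSocle R M N, h⟩ (Vs R M N) :=
  isGenericPoint_iff_specializes.2 fun S =>
    SecondSpec.specializes_iff_le.trans S.2.le_secSocle_iff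

theorem isIrreducible_Vs_iff {N : Submodule R M} :
    IsIrreducible (Vs R M N) ↔ IsSecondSubmodule R M (secSocle R M N) := by
  constructor
  · intro h
    rw [secSocle_eq_iSup]
    exact isSecondSubmodule_iSup_of_isIrreducible h
  · exact fun h => (isGenericPoint_secSocle h).isIrreducible

end

/-- Cor 2.27: `V^{s*}(N)` is irreducible iff `soc(N)` is a second submodule of `M`.
In particular, `Spec^s(M)` is irreducible iff `soc(M)` is a second submodule. -/
theorem stmt15 :
    (∀ N : Submodule R M,
        IsIrreducible (Vs R M N) ↔ IsSecondSubmodule R M (secSocle R M N)) ∧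
      (IsIrreducible (Set.univ : Set (SecondSpec R M)) ↔
        IsSecondSubmodule R M (secSocle R M ⊤)) := by
  refine ⟨fun N => isIrreducible_Vs_iff, ?_⟩
  rw [← Vs_top]
  exact isIrreducible_Vs_iff
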